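/- Let r ≥ 3 be an integer. For every ε > 0 there exists a constant c = c(ε) > 0 such that for every odd prime power q and every subset E ⊆ (M_3(𝔽_q))^r with #E > c·q^{7r+4+ε}, one has Δ(E) = M_3(𝔽_q). -/

import Mathlib

/-!
Suppose `T` is not a distance of `E`. By orthogonality of the characters `X ↦ ψ (tr (A * X))`,
`#E ^ 2` equals minus the sum over `A ≠ 0` of `ψ (-tr (A * T))` times the sum over `X, Y ∈ E` of
`ψ (tr (A * d(X, Y)))`. The latter is a character sum for the quadratic form `tr (A * ‖X‖)`, whose
radical consists of the tuples with entries `Z` satisfying `A * Z = -Z * A`; by Cauchy–Schwarz it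
is at most `#E * √(q ^ ((9 + d) * r))`, where `d` is the dimension of the space of these `Z`. For
most `A` one has `d = 0`, which costs `q ^ 9 * √(q ^ (9 * r))`, and the matrices `A` with a larger
`d`, up to `5`, are so rare that for `r ≥ 3` each value of `d` contributes `O(q ^ (7 * r + 4))`.
-/

open scoped BigOperators

namespace FalconerMatrix

open Finset Matrix

section ExponentialSums

variable {F V W P : Type*} [Field F] [AddCommGroup V] [Module F V] [AddCommGroup W] [Module F W]
  [AddCommGroup P] [Module F P]

open Classical in
theorem sum_addChar_linearMap [Fintype V] {R : Type*} [CommRing R] [IsDomain R] {ψ : AddChar F R}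
    (hψ : ψ ≠ 1) (ℓ : V →ₗ[F] F) : ∑ x, ψ (ℓ x) = if ℓ = 0 then (Fintype.card V : R) else 0 := by
  split_ifs with hℓ
  · simp [hℓ]
  · obtain ⟨v, hv : ℓ v ≠ 0⟩ := DFunLike.ne_iff.1 hℓ
    obtain ⟨a, ha⟩ := AddChar.ne_one_iff.1 hψ
    have hψℓ : ψ.compAddMonoidHom ℓ.toAddMonoidHom ≠ 1 :=
      AddChar.ne_one_iff.2 ⟨(a / ℓ v) • v, by simpa [hv] using ha⟩
    exact AddChar.sum_eq_zero_of_ne_one hψℓ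

theorem norm_sq_sum_eq {ι : Type*} (s : Finset ι) (f : ι → ℂ) :
    ((‖∑ i ∈ s, f i‖ ^ 2 : ℝ) : ℂ) = ∑ i ∈ s, ∑ j ∈ s, f i * starRingEnd ℂ (f j) := by
  rw [Complex.ofReal_pow, ← Complex.mul_conj', map_sum, Finset.sum_mul_sum]

theorem quadraticForm_sub_sub {R M : Type*} [CommRing R] [AddCommGroup M] [Module R M]
    (Q : QuadraticForm R M) (X Y Y' : M) :
    Q (X - Y) - Q (X - Y') = Q Y - Q Y' - Q.polarBilin (Y - Y') X := by
  have hsub (Z : M) : Q (X - Z) = Q X + Q Z - Q.polarBilin Z X := by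
    rw [sub_eq_add_neg, QuadraticMap.map_add Q, QuadraticMap.map_neg Q,
      QuadraticMap.polar_neg_right, QuadraticMap.polarBilin_apply_apply, QuadraticMap.polar_comm,
      sub_eq_add_neg]
  rw [hsub, hsub, map_sub, LinearMap.sub_apply]
  ring

open Classical in
theorem sum_norm_sq_sum_addChar_quadraticForm [Finite F] [Fintype V] {ψ : AddChar F ℂ}
    (hψ : ψ ≠ 1) (Q : QuadraticForm F V) (E : Finset V) :
    ((∑ X, ‖∑ Y ∈ E, ψ (Q (X - Y))‖ ^ 2 : ℝ) : ℂ) =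
      ∑ Y ∈ E, ∑ Y' ∈ E,
        ψ (Q Y - Q Y') * if Q.polarBilin (Y - Y') = 0 then (Fintype.card V : ℂ) else 0 := by
  have hterm (X Y Y' : V) : ψ (Q (X - Y)) * starRingEnd ℂ (ψ (Q (X - Y'))) =
      ψ (Q Y - Q Y') * ψ ((-Q.polarBilin (Y - Y')) X) := by
    rw [← AddChar.map_neg_eq_conj, ← AddChar.map_add_eq_mul, ← AddChar.map_add_eq_mul,
      ← sub_eq_add_neg, quadraticForm_sub_sub, LinearMap.neg_apply, sub_eq_add_neg (Q Y - Q Y')]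
  simp_rw [Complex.ofReal_sum, norm_sq_sum_eq, hterm]
  rw [sum_comm]
  refine sum_congr rfl fun Y _ => ?_
  rw [sum_comm]
  refine sum_congr rfl fun Y' _ => ?_
  rw [← Finset.mul_sum, sum_addChar_linearMap hψ]
  simp only [neg_eq_zero]

theorem sum_norm_sq_sum_addChar_quadraticForm_le [Finite F] [Fintype V] {ψ : AddChar F ℂ}
    (hψ : ψ ≠ 1) (Q : QuadraticForm F V) (E : Finset V) :
    ∑ X, ‖∑ Y ∈ E, ψ (Q (X - Y))‖ ^ 2 ≤
      #E * (Fintype.card V * Nat.card (LinearMap.ker Q.polarBilin)) := by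
  classical
  have hfibre (Y : V) : #{Y' ∈ E | Q.polarBilin (Y - Y') = 0} ≤
      Nat.card (LinearMap.ker Q.polarBilin) := by
    rw [← SetLike.coe_sort_coe, Nat.card_coe_set_eq, ← Set.ncard_coe_finset]
    refine Set.ncard_le_ncard_of_injOn (Y - ·) (fun Y' hY' => ?_) (sub_right_injective.injOn)
    simpa using (mem_filter.1 hY').2
  calc ∑ X, ‖∑ Y ∈ E, ψ (Q (X - Y))‖ ^ 2
      = ‖((∑ X, ‖∑ Y ∈ E, ψ (Q (X - Y))‖ ^ 2 : ℝ) : ℂ)‖ := by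
        rw [Complex.norm_real, Real.norm_of_nonneg (by positivity)]
    _ ≤ ∑ Y ∈ E, ∑ Y' ∈ E, if Q.polarBilin (Y - Y') = 0 then (Fintype.card V : ℝ) else 0 := by
        rw [sum_norm_sq_sum_addChar_quadraticForm hψ]
        refine norm_sum_le_of_le _ fun Y _ => norm_sum_le_of_le _ fun Y' _ => ?_
        rw [norm_mul, AddChar.norm_apply, one_mul]
        split_ifs <;> simp
    _ ≤ ∑ _ ∈ E, Fintype.card V * (Nat.card (LinearMap.ker Q.polarBilin) : ℝ) := by
        refine sum_le_sum fun Y _ => ?_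
        rw [← sum_filter, sum_const, nsmul_eq_mul, mul_comm]
        gcongr
        exact hfibre Y
    _ = _ := by rw [sum_const, nsmul_eq_mul]

theorem norm_sum_sum_addChar_quadraticForm_le [Finite F] [Fintype V] {ψ : AddChar F ℂ}
    (hψ : ψ ≠ 1) (Q : QuadraticForm F V) (E : Finset V) :
    ‖∑ X ∈ E, ∑ Y ∈ E, ψ (Q (X - Y))‖ ≤
      #E * √(Fintype.card V * Nat.card (LinearMap.ker Q.polarBilin)) := by
  rw [← Real.sqrt_sq (Nat.cast_nonneg #E), ← Real.sqrt_mul (by positivity)]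
  refine Real.le_sqrt_of_sq_le ?_
  calc ‖∑ X ∈ E, ∑ Y ∈ E, ψ (Q (X - Y))‖ ^ 2
      ≤ (∑ X ∈ E, ‖∑ Y ∈ E, ψ (Q (X - Y))‖) ^ 2 := by gcongr; exact norm_sum_le _ _
    _ ≤ #E * ∑ X ∈ E, ‖∑ Y ∈ E, ψ (Q (X - Y))‖ ^ 2 := sq_sum_le_card_mul_sum_sq
    _ ≤ #E * ∑ X, ‖∑ Y ∈ E, ψ (Q (X - Y))‖ ^ 2 := by gcongr; exact subset_univ E
    _ ≤ #E * (#E * (Fintype.card V * Nat.card (LinearMap.ker Q.polarBilin))) := by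
        gcongr; exact sum_norm_sq_sum_addChar_quadraticForm_le hψ Q E
    _ = _ := by ring

theorem card_sq_eq_neg_sum_of_forall_ne [Fintype P] [DecidableEq P] {ψ : AddChar F ℂ}
    (hψ : ψ ≠ 1) {B : P →ₗ[F] W →ₗ[F] F} (hB : B.SeparatingRight) (Q : QuadraticMap F V W)
    {E : Finset V} {T : W} (hT : ∀ X ∈ E, ∀ Y ∈ E, Q (X - Y) ≠ T) :
    (#E : ℂ) ^ 2 = -∑ p with p ≠ 0, ψ (-B p T) * ∑ X ∈ E, ∑ Y ∈ E, ψ (B p (Q (X - Y))) := by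
  have hpair (X) (hX : X ∈ E) (Y) (hY : Y ∈ E) :
      ∑ p, ψ (-B p T) * ψ (B p (Q (X - Y))) = 0 := by
    have hne : B.flip (Q (X - Y) - T) ≠ 0 := fun h =>
      hT X hX Y hY (sub_eq_zero.1 (hB _ fun p => LinearMap.congr_fun h p))
    rw [← (sum_addChar_linearMap hψ _).trans (if_neg hne)]
    refine sum_congr rfl fun p _ => ?_
    rw [LinearMap.flip_apply, (B p).map_sub, sub_eq_add_neg (B p _), AddChar.map_add_eq_mul,
      mul_comm]
  have htotal : ∑ p, ψ (-B p T) * ∑ X ∈ E, ∑ Y ∈ E, ψ (B p (Q (X - Y))) = 0 := by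
    simp only [Finset.mul_sum]
    rw [sum_comm]
    refine sum_eq_zero fun X hX => ?_
    rw [sum_comm]
    exact sum_eq_zero fun Y hY => hpair X hX Y hY
  rw [← add_sum_erase _ _ (mem_univ 0), ← filter_ne'] at htotal
  simpa [sq] using eq_neg_of_add_eq_zero_left htotal

theorem card_le_sum_sqrt_of_forall_ne [Finite F] [Fintype V] [Fintype P] [DecidableEq P]
    {B : P →ₗ[F] W →ₗ[F] F} (hB : B.SeparatingRight) (Q : QuadraticMap F V W) {E : Finset V}
    {T : W} (hT : ∀ X ∈ E, ∀ Y ∈ E, Q (X - Y) ≠ T) :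
    (#E : ℝ) ≤ ∑ p with p ≠ 0,
      √(Fintype.card V * Nat.card (LinearMap.ker ((B p).compQuadraticMap Q).polarBilin)) := by
  rcases E.eq_empty_or_nonempty with rfl | hE
  · simpa using sum_nonneg fun _ _ => by positivity
  obtain ⟨ψ, hψ₁⟩ := AddChar.exists_apply_ne_zero.2 (one_ne_zero (α := F))
  have hψ : ψ ≠ 1 := AddChar.ne_one_iff.2 ⟨1, hψ₁⟩
  refine le_of_mul_le_mul_left ?_ (Nat.cast_pos.2 hE.card_pos)
  calc (#E : ℝ) * #E = ‖(#E : ℂ) ^ 2‖ := by simp [sq]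
    _ ≤ ∑ p with p ≠ 0,
        #E * √(Fintype.card V *
          Nat.card (LinearMap.ker ((B p).compQuadraticMap Q).polarBilin)) := by
        rw [card_sq_eq_neg_sum_of_forall_ne hψ hB Q hT, norm_neg]
        refine norm_sum_le_of_le _ fun p _ => ?_
        rw [norm_mul, AddChar.norm_apply, one_mul]
        exact norm_sum_sum_addChar_quadraticForm_le hψ ((B p).compQuadraticMap Q) E
    _ = _ := (Finset.mul_sum _ _ _).symm

end ExponentialSums

section Matrices

variable {R n ι : Type*} [CommRing R] [Fintype n] [DecidableEq n] [Fintype ι]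

variable (R n ι) in
/-- The matrix-valued quadratic map `‖X‖ = ∑ i, X i ^ 2` on tuples of square matrices, whose value
at a difference is the distance. -/
def sumSq : QuadraticMap R (ι → Matrix n n R) (Matrix n n R) :=
  ∑ i, (LinearMap.BilinMap.toQuadraticMap (LinearMap.mul R (Matrix n n R))).comp (LinearMap.proj i)

@[simp]
theorem sumSq_apply (X : ι → Matrix n n R) : sumSq R n ι X = ∑ i, X i ^ 2 := by
  simp [sumSq, _root_.sum_apply, sq]

variable (R n) in
/-- The pairing `(A, X) ↦ tr (A * X)`, through which every linear form on square matrices is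
represented. -/
def tracePairing : Matrix n n R →ₗ[R] Matrix n n R →ₗ[R] R :=
  (LinearMap.mul R (Matrix n n R)).compr₂ (traceLinearMap n R R)

@[simp]
theorem tracePairing_apply (A X : Matrix n n R) : tracePairing R n A X = (A * X).trace := rfl

theorem separatingRight_tracePairing : (tracePairing R n).SeparatingRight := fun X hX =>
  ext_iff_trace_mul_left.2 fun A => by simpa using hX A

/-- The matrices `Z` with `A * Z = -Z * A`, which form the radical of the quadratic form
`X ↦ tr (A * X ^ 2)`. -/
def anticommutant (A : Matrix n n R) : Submodule R (Matrix n n R) :=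
  LinearMap.ker (LinearMap.mulLeft R A + LinearMap.mulRight R A)

@[simp]
theorem mem_anticommutant {A Z : Matrix n n R} : Z ∈ anticommutant A ↔ A * Z + Z * A = 0 :=
  Iff.rfl

theorem polarBilin_trace_sumSq (A : Matrix n n R) (X Y : ι → Matrix n n R) :
    ((tracePairing R n A).compQuadraticMap (sumSq R n ι)).polarBilin X Y =
      ∑ i, tracePairing R n (A * X i + X i * A) (Y i) := by
  simp only [QuadraticMap.polarBilin_apply_apply, QuadraticMap.polar,
    LinearMap.compQuadraticMap_apply, sumSq_apply, tracePairing_apply, Matrix.mul_sum,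
    trace_sum, ← sum_sub_distrib, Pi.add_apply]
  refine sum_congr rfl fun i _ => ?_
  have hcyc : (A * (Y i * X i)).trace = (X i * (A * Y i)).trace := by
    rw [← Matrix.mul_assoc, trace_mul_comm]
  simp only [sq, mul_add, add_mul, trace_add, hcyc, Matrix.mul_assoc]
  ring

theorem ker_polarBilin_trace_sumSq_le (A : Matrix n n R) :
    LinearMap.ker ((tracePairing R n A).compQuadraticMap (sumSq R n ι)).polarBilin ≤
      Submodule.pi Set.univ fun _ => anticommutant A := by
  classical
  intro X hX i _
  refine ext_iff_trace_mul_right.2 fun Y => ?_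
  have h := LinearMap.congr_fun (LinearMap.mem_ker.1 hX) (Pi.single i Y)
  rw [polarBilin_trace_sumSq, sum_eq_single i (by simp +contextual) (by simp)] at h
  simpa [add_mul] using h

variable {F : Type*} [Field F]

theorem natCard_ker_polarBilin_trace_sumSq_le [Finite F] (A : Matrix n n F) :
    Nat.card (LinearMap.ker ((tracePairing F n A).compQuadraticMap (sumSq F n ι)).polarBilin) ≤
      Nat.card F ^ (Module.finrank F (anticommutant A) * Fintype.card ι) := by
  classical
  calc _ ≤ Nat.card (Set.univ.pi fun _ : ι => (anticommutant A : Set (Matrix n n F))) :=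
        Nat.card_mono (Set.toFinite _) (ker_polarBilin_trace_sumSq_le A)
    _ = ∏ _ : ι, Nat.card (anticommutant A) := by
        rw [Nat.card_congr (Equiv.Set.univPi _), Nat.card_pi]; rfl
    _ = _ := by
        rw [prod_const, card_univ, pow_mul, ← Module.natCard_eq_pow_finrank (K := F)]

open Classical in
theorem card_le_sum_sqrt_anticommutant [Fintype F] {E : Finset (ι → Matrix n n F)}
    {T : Matrix n n F} (hT : ∀ X ∈ E, ∀ Y ∈ E, ∑ i, (X i - Y i) ^ 2 ≠ T) :
    (#E : ℝ) ≤ ∑ A : Matrix n n F with A ≠ 0,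
      √((Fintype.card F : ℝ) ^
        ((Fintype.card n ^ 2 + Module.finrank F (anticommutant A)) * Fintype.card ι)) := by
  refine (card_le_sum_sqrt_of_forall_ne separatingRight_tracePairing (sumSq F n ι)
    (T := T) fun X hX Y hY => ?_).trans (sum_le_sum fun A _ => ?_)
  · simpa using hT X hX Y hY
  have hcard : Fintype.card (ι → Matrix n n F) =
      Fintype.card F ^ (Fintype.card n ^ 2 * Fintype.card ι) := by
    rw [Module.card_eq_pow_finrank (K := F), Module.finrank_pi_fintype]
    simp [Module.finrank_matrix, sq, mul_comm]
  rw [add_mul, pow_add, hcard, ← Nat.card_eq_fintype_card (α := F)]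
  push_cast
  gcongr
  exact_mod_cast natCard_ker_polarBilin_trace_sumSq_le A

end Matrices

section CyclicVector

variable {F n : Type*} [Field F] [Fintype n] [DecidableEq n]

open Polynomial in
theorem exists_forall_aeval_eq_zero_of_mulVec_eq_zero (A : Matrix n n F) :
    ∃ e : n → F, ∀ p : F[X], aeval A p *ᵥ e = 0 → aeval A p = 0 := by
  obtain ⟨x, hx⟩ :=
    Module.exists_ker_toSpanSingleton_eq_annihilator F[X] (Module.AEval' (toLin' A))
  obtain ⟨e, rfl⟩ := (Module.AEval'.of (toLin' A)).surjective x
  refine ⟨e, fun p hp => toLinAlgEquiv'.injective ?_⟩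
  have haeval : toLinAlgEquiv' (aeval A p) = aeval (toLin' A) p :=
    (aeval_algHom_apply toLinAlgEquiv'.toAlgHom A p).symm
  have hmem : p ∈ LinearMap.ker
      (LinearMap.toSpanSingleton F[X] _ (Module.AEval'.of (toLin' A) e)) := by
    rw [LinearMap.mem_ker, LinearMap.toSpanSingleton_apply, ← Module.AEval.of_aeval_smul,
      ← haeval, Module.End.smul_def, toLinAlgEquiv'_apply, hp, map_zero]
  rw [hx, Module.AEval.annihilator_eq_ker_aeval, RingHom.mem_ker] at hmem
  rw [haeval, hmem, map_zero]

theorem exists_span_pow_mulVec_eq_top {A : Matrix n n F}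
    (hA : (minpoly F A).natDegree = Fintype.card n) :
    ∃ e : n → F, Submodule.span F (Set.range fun k : ℕ => A ^ k *ᵥ e) = ⊤ := by
  obtain ⟨e, he⟩ := exists_forall_aeval_eq_zero_of_mulVec_eq_zero A
  refine ⟨e, top_le_iff.1 ?_⟩
  have hdisj : Disjoint
      (Submodule.span F (Set.range fun i : Fin (minpoly F A).natDegree => A ^ (i : ℕ)))
      (LinearMap.ker ((mulVecBilin F F).flip e)) := by
    rw [Submodule.disjoint_def]
    intro B hB hBe
    have hB' : B ∈ Subalgebra.toSubmodule (Algebra.adjoin F {A}) := by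
      refine Submodule.span_le.2 ?_ hB
      rintro _ ⟨i, rfl⟩
      exact pow_mem (Algebra.self_mem_adjoin_singleton F A) _
    obtain ⟨p, rfl⟩ := Algebra.adjoin_singleton_eq_range_aeval F A ▸ hB'
    exact he p hBe
  rw [← ((linearIndependent_pow A).map hdisj).span_eq_top_of_card_eq_finrank' (by simp [hA])]
  refine Submodule.span_mono ?_
  rintro _ ⟨i, rfl⟩
  exact ⟨i, rfl⟩

end CyclicVector

section Anticommutant

variable {F n : Type*} [Field F] [Fintype n] [DecidableEq n]

theorem mul_pow_eq_of_mem_anticommutant {R : Type*} [CommRing R] {A Z : Matrix n n R}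
    (hZ : Z ∈ anticommutant A) (k : ℕ) :
    Z * A ^ k = (-A) ^ k * Z :=
  (show SemiconjBy Z A (-A) by
    rw [SemiconjBy, neg_mul]; exact eq_neg_of_add_eq_zero_right hZ).pow_right k

theorem exists_injective_mulVec_anticommutant {A : Matrix n n F}
    (hA : (minpoly F A).natDegree = Fintype.card n) :
    ∃ e : n → F, Function.Injective
      (((mulVecBilin F F).flip e).domRestrict (anticommutant A)) := by
  obtain ⟨e, he⟩ := exists_span_pow_mulVec_eq_top hA
  refine ⟨e, (injective_iff_map_eq_zero _).2 ?_⟩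
  rintro ⟨Z, hZ⟩ (hZe : Z *ᵥ e = 0)
  have hle : Submodule.span F (Set.range fun k : ℕ => A ^ k *ᵥ e) ≤ LinearMap.ker (toLin' Z) := by
    rw [Submodule.span_le]
    rintro _ ⟨k, rfl⟩
    rw [SetLike.mem_coe, LinearMap.mem_ker, toLin'_apply, mulVec_mulVec,
      mul_pow_eq_of_mem_anticommutant hZ, ← mulVec_mulVec, hZe, mulVec_zero]
  rw [he, top_le_iff, LinearMap.ker_eq_top] at hle
  exact Subtype.ext ((LinearEquiv.map_eq_zero_iff toLin').1 hle)

theorem finrank_anticommutant_le_card {A : Matrix n n F}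
    (hA : (minpoly F A).natDegree = Fintype.card n) :
    Module.finrank F (anticommutant A) ≤ Fintype.card n := by
  obtain ⟨e, he⟩ := exists_injective_mulVec_anticommutant hA
  simpa using LinearMap.finrank_le_finrank_of_injective he

theorem finrank_anticommutant_lt_card {A B : Matrix n n F}
    (hA : (minpoly F A).natDegree = Fintype.card n) (hB : B ≠ 0)
    (hBZ : ∀ Z ∈ anticommutant A, B * Z = 0) :
    Module.finrank F (anticommutant A) < Fintype.card n := by
  obtain ⟨e, he⟩ := exists_injective_mulVec_anticommutant hA
  have hker : ∀ Z, ((mulVecBilin F F).flip e).domRestrict (anticommutant A) Z ∈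
      LinearMap.ker (toLin' B) := by
    rintro ⟨Z, hZ⟩
    change B *ᵥ Z *ᵥ e = 0
    rw [mulVec_mulVec, hBZ Z hZ, zero_mulVec]
  have hne : LinearMap.ker (toLin' B) ≠ ⊤ :=
    fun h => hB ((LinearEquiv.map_eq_zero_iff toLin').1 (LinearMap.ker_eq_top.1 h))
  calc _ ≤ Module.finrank F (LinearMap.ker (toLin' B)) :=
        LinearMap.finrank_le_finrank_of_injective (LinearMap.injective_codRestrict_iff hker |>.2 he)
    _ < _ := by simpa using Submodule.finrank_lt hne

end Anticommutant

section Cubic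

/-- The map `A ↦ tr A - A`. For `3 × 3` matrices, the eigenvalues of `traceSub A` are the sums of
two eigenvalues of `A`. -/
def traceSub {R n : Type*} [CommRing R] [Fintype n] [DecidableEq n] (A : Matrix n n R) :
    Matrix n n R :=
  A.trace • 1 - A

variable {R : Type*} [CommRing R]

theorem pow_three_eq (A : Matrix (Fin 3) (Fin 3) R) :
    A ^ 3 = A.trace • A ^ 2 - A.adjugate.trace • A + A.det • 1 := by
  ext i j
  fin_cases i <;> fin_cases j <;>
    simp [adjugate_fin_three, pow_succ, mul_apply, Fin.sum_univ_three, det_fin_three,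
      trace_fin_three] <;> ring

theorem det_traceSub (A : Matrix (Fin 3) (Fin 3) R) :
    (traceSub A).det = A.trace * A.adjugate.trace - A.det := by
  simp [traceSub, adjugate_fin_three, det_fin_three, trace_fin_three]
  ring

theorem pow_three_mul_eq (A Z : Matrix (Fin 3) (Fin 3) R) :
    A ^ 3 * Z = A.trace • (A ^ 2 * Z) - A.adjugate.trace • (A * Z) + A.det • Z := by
  rw [pow_three_eq]
  simp only [add_mul, sub_mul, smul_mul_assoc, one_mul]

-- `Z` changes the sign of the odd powers of `A`, so multiplying the Cayley–Hamilton identity by `Z`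
-- on either side separates its even part from its odd part.
theorem neg_pow_three_mul_eq {A Z : Matrix (Fin 3) (Fin 3) R} (hZ : Z ∈ anticommutant A) :
    -(A ^ 3 * Z) = A.trace • (A ^ 2 * Z) + A.adjugate.trace • (A * Z) + A.det • Z := by
  have h := congrArg (Z * ·) (pow_three_eq A)
  have h₁ : Z * A = -(A * Z) := eq_neg_of_add_eq_zero_right hZ
  have h₂ : Z * A ^ 2 = A ^ 2 * Z := by simpa using mul_pow_eq_of_mem_anticommutant hZ 2
  have h₃ : Z * A ^ 3 = -(A ^ 3 * Z) := by
    rw [mul_pow_eq_of_mem_anticommutant hZ, (by decide : Odd 3).neg_pow, neg_mul]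
  simpa [mul_add, mul_sub, h₁, h₂, h₃] using h

variable {F : Type*} [Field F] {A Z : Matrix (Fin 3) (Fin 3) F}

theorem trace_smul_sq_add_det_smul_mul_eq_zero (h2 : (2 : F) ≠ 0) (hZ : Z ∈ anticommutant A) :
    (A.trace • A ^ 2 + A.det • 1) * Z = 0 := by
  have h : (2 : F) • ((A.trace • A ^ 2 + A.det • 1) * Z) = 0 := by
    simp only [add_mul, smul_mul_assoc, one_mul]
    linear_combination (norm := module) -(pow_three_mul_eq A Z) - neg_pow_three_mul_eq hZ
  exact (smul_eq_zero.1 h).resolve_left h2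

theorem pow_three_mul_add_eq_zero (h2 : (2 : F) ≠ 0) (hZ : Z ∈ anticommutant A) :
    A ^ 3 * Z + A.adjugate.trace • (A * Z) = 0 := by
  have h : (2 : F) • (A ^ 3 * Z + A.adjugate.trace • (A * Z)) = 0 := by
    linear_combination (norm := module) pow_three_mul_eq A Z - neg_pow_three_mul_eq hZ
  exact (smul_eq_zero.1 h).resolve_left h2

theorem det_eq_zero_or_det_traceSub_eq_zero (h2 : (2 : F) ≠ 0) (hA : anticommutant A ≠ ⊥) :
    A.det = 0 ∨ (traceSub A).det = 0 := by
  obtain ⟨Z, hZ, hZ0⟩ := Submodule.exists_mem_ne_zero_of_ne_bot hA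
  refine or_iff_not_imp_left.2 fun hdet => ?_
  have hA1 : IsUnit A := (isUnit_iff_isUnit_det A).2 (isUnit_iff_ne_zero.2 hdet)
  have hcubic : A ^ 2 * Z + A.adjugate.trace • Z = 0 := by
    refine hA1.mul_left_cancel ?_
    rw [mul_zero, ← pow_three_mul_add_eq_zero h2 hZ, mul_add, mul_smul_comm, ← mul_assoc,
      ← pow_succ']
  have hquad := trace_smul_sq_add_det_smul_mul_eq_zero h2 hZ
  rw [add_mul, smul_mul_assoc, smul_mul_assoc, one_mul] at hquad
  refine (smul_eq_zero.1 (?_ : (traceSub A).det • Z = 0)).resolve_right hZ0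
  rw [det_traceSub]
  linear_combination (norm := module) A.trace • hcubic - hquad

open Polynomial in
theorem finrank_anticommutant_le_two (h2 : (2 : F) ≠ 0) (hA : (minpoly F A).natDegree = 3)
    (hA0 : ¬(A.trace = 0 ∧ A.det = 0)) : Module.finrank F (anticommutant A) ≤ 2 := by
  have hB : A.trace • A ^ 2 + A.det • (1 : Matrix (Fin 3) (Fin 3) F) ≠ 0 := by
    intro h
    have hzero : C A.trace * X ^ 2 + C 0 * X + C A.det = 0 :=
      eq_zero_of_dvd_of_natDegree_lt
        (minpoly.dvd F A (by simpa [Algebra.algebraMap_eq_smul_one] using h))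
        (natDegree_quadratic_le.trans_lt (by rw [hA]; norm_num))
    exact hA0 ⟨by simpa [coeff_X] using congrArg (coeff · 2) hzero,
      by simpa using congrArg (coeff · 0) hzero⟩
  exact Nat.le_of_lt_succ (finrank_anticommutant_lt_card hA hB fun Z hZ =>
    trace_smul_sq_add_det_smul_mul_eq_zero h2 hZ)

end Cubic

section ScalarAddRankOne

variable {R n : Type*} [CommRing R] [Fintype n] [DecidableEq n] {a : R} {u v : n → R}
  {Z : Matrix n n R}

theorem anticommutant_smul_one_add_vecMulVec_eq
    (hZ : Z ∈ anticommutant (a • (1 : Matrix n n R) + vecMulVec u v)) :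
    (2 * a) • Z + vecMulVec u (v ᵥ* Z) + vecMulVec (Z *ᵥ u) v = 0 := by
  rw [mem_anticommutant, add_mul, mul_add, smul_mul_assoc, mul_smul_comm, one_mul, mul_one,
    vecMulVec_mul, mul_vecMulVec] at hZ
  rw [← hZ]
  module

theorem smul_mulVec_eq_of_mem_anticommutant
    (hZ : Z ∈ anticommutant (a • (1 : Matrix n n R) + vecMulVec u v)) :
    (2 * a + v ⬝ᵥ u) • (Z *ᵥ u) = -(v ⬝ᵥ Z *ᵥ u) • u := by
  have h := congrArg (· *ᵥ u) (anticommutant_smul_one_add_vecMulVec_eq hZ)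
  simp only [add_mulVec, smul_mulVec, vecMulVec_mulVec, op_smul_eq_smul, zero_mulVec,
    ← dotProduct_mulVec] at h
  linear_combination (norm := module) h

theorem smul_vecMul_eq_of_mem_anticommutant
    (hZ : Z ∈ anticommutant (a • (1 : Matrix n n R) + vecMulVec u v)) :
    (2 * a + v ⬝ᵥ u) • (v ᵥ* Z) = -(v ⬝ᵥ Z *ᵥ u) • v := by
  have h := congrArg (v ᵥ* ·) (anticommutant_smul_one_add_vecMulVec_eq hZ)
  simp only [vecMul_add, vecMul_smul, vecMul_vecMulVec, vecMul_zero] at h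
  linear_combination (norm := module) h

variable {F : Type*} [Field F] {a : F} {u v : n → F} {Z : Matrix n n F}

theorem finrank_anticommutant_smul_one_add_vecMulVec_le_one (h2 : (2 : F) ≠ 0) (ha : a ≠ 0)
    (huv : 2 * a + v ⬝ᵥ u ≠ 0) :
    Module.finrank F (anticommutant (a • (1 : Matrix n n F) + vecMulVec u v)) ≤ 1 := by
  refine (Submodule.finrank_mono fun Z hZ => ?_).trans
    ((finrank_span_le_card {vecMulVec u v}).trans (by simp))
  have ha2 : 2 * a * (2 * a + v ⬝ᵥ u) ≠ 0 := mul_ne_zero (mul_ne_zero h2 ha) huv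
  refine (Submodule.smul_mem_iff _ ha2).1 (Submodule.mem_span_singleton.2
    ⟨2 * (v ⬝ᵥ Z *ᵥ u), ?_⟩)
  have hcol := congrArg (vecMulVec · v) (smul_mulVec_eq_of_mem_anticommutant hZ)
  have hrow := congrArg (vecMulVec u ·) (smul_vecMul_eq_of_mem_anticommutant hZ)
  simp only [smul_vecMulVec, vecMulVec_smul] at hcol hrow
  linear_combination (norm := module) -(2 * a + v ⬝ᵥ u) •
    anticommutant_smul_one_add_vecMulVec_eq hZ + hcol + hrow

theorem finrank_ker_dotProductEquiv (hv : v ≠ 0) :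
    Module.finrank F (LinearMap.ker (dotProductEquiv F n v)) = Fintype.card n - 1 := by
  have h := Module.Dual.finrank_ker_add_one_of_ne_zero
    ((LinearEquiv.map_ne_zero_iff (dotProductEquiv F n)).2 hv)
  rw [Module.finrank_fintype_fun_eq_card] at h
  omega

theorem finrank_anticommutant_smul_one_add_vecMulVec_le (h2 : (2 : F) ≠ 0) (ha : a ≠ 0)
    (huv : 2 * a + v ⬝ᵥ u = 0) :
    Module.finrank F (anticommutant (a • (1 : Matrix n n F) + vecMulVec u v)) ≤
      2 * (Fintype.card n - 1) := by
  have ha2 : 2 * a ≠ 0 := mul_ne_zero h2 ha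
  have hu : u ≠ 0 := by rintro rfl; simp [ha2] at huv
  have hv : v ≠ 0 := by rintro rfl; simp [ha2] at huv
  set U := anticommutant (a • (1 : Matrix n n F) + vecMulVec u v)
  have hpair (Z : U) : v ⬝ᵥ Z.1 *ᵥ u = 0 := by
    have h := smul_mulVec_eq_of_mem_anticommutant Z.2
    rw [huv, zero_smul, eq_comm, smul_eq_zero, neg_eq_zero] at h
    exact h.resolve_right hu
  let row : U →ₗ[F] LinearMap.ker (dotProductEquiv F n u) :=
    ((vecMulBilin F F v).domRestrict U).codRestrict _ fun Z => by
      simpa [dotProduct_comm u, ← dotProduct_mulVec] using hpair Z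
  let col : U →ₗ[F] LinearMap.ker (dotProductEquiv F n v) :=
    (((mulVecBilin F F).flip u).domRestrict U).codRestrict _ fun Z => by simpa using hpair Z
  have hinj : Function.Injective (row.prod col) := by
    refine (injective_iff_map_eq_zero _).2 fun Z hZ => Subtype.ext ?_
    have hrow : v ᵥ* Z.1 = 0 := congrArg (fun p => p.1.1) hZ
    have hcol : Z.1 *ᵥ u = 0 := congrArg (fun p => p.2.1) hZ
    have h := anticommutant_smul_one_add_vecMulVec_eq Z.2
    rw [hrow, hcol, vecMulVec_zero, zero_vecMulVec, add_zero, add_zero] at h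
    exact (smul_eq_zero.1 h).resolve_left ha2
  have h := LinearMap.finrank_le_finrank_of_injective hinj
  rwa [Module.finrank_prod, finrank_ker_dotProductEquiv hu, finrank_ker_dotProductEquiv hv,
    ← two_mul] at h

/-- The linear map deleting row `i` and column `j` of a matrix. The deleted entries are determined
by the remaining ones together with the products of the matrix with suitable vectors. -/
def deleteRowCol (i j : n) : Matrix n n F →ₗ[F] Matrix {k // k ≠ i} {k // k ≠ j} F where
  toFun Z := Z.submatrix (↑) (↑)
  map_add' _ _ := rfl
  map_smul' _ _ := rfl

omit [DecidableEq n] in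
theorem finrank_matrix_ne_ne (i j : n) :
    Module.finrank F (Matrix {k // k ≠ i} {k // k ≠ j} F) = (Fintype.card n - 1) ^ 2 := by
  classical
  simp [Module.finrank_matrix, Fintype.card_subtype_compl, sq]

omit [DecidableEq n] in
theorem eq_zero_of_deleteRowCol_eq_zero {i j : n} (hi : v i ≠ 0) (hj : u j ≠ 0)
    (hvZ : v ᵥ* Z = 0) (hZu : Z *ᵥ u = 0) (hdel : deleteRowCol i j Z = 0) : Z = 0 := by
  have hrow (k l) (hk : k ≠ i) : Z k l = 0 := by
    have hdel' (l) (hl : l ≠ j) : Z k l = 0 := congrFun (congrFun hdel ⟨k, hk⟩) ⟨l, hl⟩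
    have h : Z k j * u j = 0 :=
      (sum_eq_single j (fun l _ hl => mul_eq_zero_of_left (hdel' l hl) _) (by simp)).symm.trans
        (congrFun hZu k)
    obtain rfl | hl := eq_or_ne l j
    exacts [(mul_eq_zero.1 h).resolve_right hj, hdel' l hl]
  ext k l
  obtain rfl | hk := eq_or_ne k i
  · have h : v k * Z k l = 0 :=
      (sum_eq_single k (fun k' _ hk => mul_eq_zero_of_right _ (hrow k' l hk)) (by simp)).symm.trans
        (congrFun hvZ l)
    exact (mul_eq_zero.1 h).resolve_left hi
  · exact hrow k l hk

theorem exists_smul_of_mem_anticommutant_vecMulVec (hu : u ≠ 0) (hv : v ≠ 0)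
    (hZ : Z ∈ anticommutant (vecMulVec u v)) :
    ∃ c : F, v ᵥ* Z = c • v ∧ Z *ᵥ u = -c • u := by
  obtain ⟨j, hj : u j ≠ 0⟩ := Function.ne_iff.1 hu
  obtain ⟨i, hi : v i ≠ 0⟩ := Function.ne_iff.1 hv
  rw [mem_anticommutant, vecMulVec_mul, mul_vecMulVec] at hZ
  have hentry (k l) : u k * (v ᵥ* Z) l + (Z *ᵥ u) k * v l = 0 := congrFun (congrFun hZ k) l
  have hrow : v ᵥ* Z = (-(Z *ᵥ u) j / u j) • v := by
    ext l
    rw [Pi.smul_apply, smul_eq_mul]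
    field_simp
    linear_combination hentry j l
  refine ⟨_, hrow, funext fun k => mul_right_cancel₀ hi ?_⟩
  have h := hentry k i
  rw [hrow, Pi.smul_apply, smul_eq_mul] at h
  rw [Pi.smul_apply, smul_eq_mul]
  linear_combination h

theorem finrank_anticommutant_vecMulVec_le (hu : u ≠ 0) (hv : v ≠ 0) :
    Module.finrank F (anticommutant (vecMulVec u v)) ≤ (Fintype.card n - 1) ^ 2 + 1 := by
  obtain ⟨j, hj : u j ≠ 0⟩ := Function.ne_iff.1 hu
  obtain ⟨i, hi : v i ≠ 0⟩ := Function.ne_iff.1 hv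
  let f := ((deleteRowCol (F := F) i j).prod
    (LinearMap.proj j ∘ₗ (mulVecBilin F F).flip u)).domRestrict (anticommutant (vecMulVec u v))
  have hinj : Function.Injective f := by
    refine (injective_iff_map_eq_zero _).2 ?_
    rintro ⟨Z, hZ⟩ hfZ
    obtain ⟨c, hrow, hcol⟩ := exists_smul_of_mem_anticommutant_vecMulVec hu hv hZ
    have hc : (Z *ᵥ u) j = 0 := congrArg Prod.snd hfZ
    obtain rfl : c = 0 := by simpa [hcol, hj] using hc
    rw [neg_zero, zero_smul] at hcol
    rw [zero_smul] at hrow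
    exact Subtype.ext
      (eq_zero_of_deleteRowCol_eq_zero hi hj hrow hcol (congrArg Prod.fst hfZ))
  simpa [finrank_matrix_ne_ne] using LinearMap.finrank_le_finrank_of_injective hinj

theorem finrank_anticommutant_vecMulVec_le_of_dotProduct_ne_zero (h2 : (2 : F) ≠ 0)
    (huv : v ⬝ᵥ u ≠ 0) :
    Module.finrank F (anticommutant (vecMulVec u v)) ≤ (Fintype.card n - 1) ^ 2 := by
  have hu : u ≠ 0 := by rintro rfl; simp at huv
  have hv : v ≠ 0 := by rintro rfl; simp at huv
  obtain ⟨j, hj : u j ≠ 0⟩ := Function.ne_iff.1 hu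
  obtain ⟨i, hi : v i ≠ 0⟩ := Function.ne_iff.1 hv
  let f := (deleteRowCol (F := F) i j).domRestrict (anticommutant (vecMulVec u v))
  have hinj : Function.Injective f := by
    refine (injective_iff_map_eq_zero _).2 ?_
    rintro ⟨Z, hZ⟩ hfZ
    obtain ⟨c, hrow, hcol⟩ := exists_smul_of_mem_anticommutant_vecMulVec hu hv hZ
    have hc : 2 * c * (v ⬝ᵥ u) = 0 := by
      have h := dotProduct_mulVec v Z u
      rw [hrow, hcol, dotProduct_smul, smul_dotProduct, smul_eq_mul, smul_eq_mul] at h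
      linear_combination -h
    obtain rfl : c = 0 := by simpa [h2, huv] using hc
    rw [neg_zero, zero_smul] at hcol
    rw [zero_smul] at hrow
    exact Subtype.ext (eq_zero_of_deleteRowCol_eq_zero hi hj hrow hcol hfZ)
  simpa [finrank_matrix_ne_ne] using LinearMap.finrank_le_finrank_of_injective hinj

end ScalarAddRankOne

section Derogatory

variable {F : Type*} [Field F]

theorem exists_eq_vecMulVec_of_rank_le_one {m n : Type*} [Finite m] [Fintype n]
    {B : Matrix m n F} (hB : B.rank ≤ 1) : ∃ u v, B = vecMulVec u v := by
  classical
  rw [Matrix.rank, finrank_le_one_iff] at hB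
  obtain ⟨u, hu⟩ := hB
  choose c hc using hu
  refine ⟨u, fun j => c ⟨B.mulVecLin (Pi.single j 1), LinearMap.mem_range_self _ _⟩, ?_⟩
  ext i j
  have h := congrArg (fun x => x.1 i)
    (hc ⟨B.mulVecLin (Pi.single j 1), LinearMap.mem_range_self _ _⟩)
  simpa [vecMulVec_apply, mul_comm] using h.symm

theorem exists_eq_vecMulVec_insertNth_of_rank_le_one {n : Type*} [Fintype n] {k : ℕ}
    {A : Matrix (Fin (k + 1)) n F} (hA : A.rank ≤ 1) :
    ∃ (i : Fin (k + 1)) (u : Fin k → F) (v : n → F), A = vecMulVec (i.insertNth 1 u) v := by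
  obtain ⟨u, v, rfl⟩ := exists_eq_vecMulVec_of_rank_le_one hA
  obtain rfl | hu := eq_or_ne u 0
  · exact ⟨0, 0, 0, by ext; simp [vecMulVec_apply]⟩
  obtain ⟨i, hi : u i ≠ 0⟩ := Function.ne_iff.1 hu
  refine ⟨i, (u i)⁻¹ • i.removeNth u, u i • v, ?_⟩
  have hnorm : i.insertNth 1 ((u i)⁻¹ • i.removeNth u) = (u i)⁻¹ • u := by
    rw [Fin.insertNth_eq_iff]
    exact ⟨(inv_mul_cancel₀ hi).symm, rfl⟩
  rw [hnorm, smul_vecMulVec, vecMulVec_smul, smul_smul, inv_mul_cancel₀ hi, one_smul]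

open Polynomial in
theorem isRoot_charpoly_iff_isRoot_minpoly {n : Type*} [Fintype n] [DecidableEq n]
    (A : Matrix n n F) (a : F) : A.charpoly.IsRoot a ↔ (minpoly F A).IsRoot a := by
  rw [← minpoly_toLin', ← Module.End.hasEigenvalue_iff_isRoot,
    Module.End.hasEigenvalue_iff_isRoot_charpoly, charpoly_toLin']

open Polynomial in
theorem exists_isRoot_minpoly_of_natDegree_ne_three {A : Matrix (Fin 3) (Fin 3) F}
    (hA : (minpoly F A).natDegree ≠ 3) : ∃ a, (minpoly F A).IsRoot a := by
  obtain ⟨g, hg⟩ := minpoly_dvd_charpoly A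
  have hmonic := minpoly.monic (Algebra.IsIntegral.isIntegral (R := F) A)
  have hpos := minpoly.natDegree_pos (Algebra.IsIntegral.isIntegral (R := F) A)
  have hg0 : g ≠ 0 := by rintro rfl; simpa [hg] using A.charpoly_monic.ne_zero
  have hdeg : 3 = (minpoly F A).natDegree + g.natDegree := by
    rw [← natDegree_mul hmonic.ne_zero hg0, ← hg, charpoly_natDegree_eq_dim, Fintype.card_fin]
  obtain h | h : (minpoly F A).natDegree = 1 ∨ g.natDegree = 1 := by omega
  · exact exists_root_of_degree_eq_one ((degree_eq_iff_natDegree_eq hmonic.ne_zero).2 h)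
  · obtain ⟨a, ha⟩ := exists_root_of_degree_eq_one ((degree_eq_iff_natDegree_eq hg0).2 h)
    exact ⟨a, (isRoot_charpoly_iff_isRoot_minpoly A a).1 (hg ▸ ha.dvd (dvd_mul_left _ _))⟩

open Polynomial in
theorem exists_sub_smul_one_mul_sub_smul_one_eq_zero {A : Matrix (Fin 3) (Fin 3) F}
    (hA : (minpoly F A).natDegree ≠ 3) : ∃ a b : F, (A - a • 1) * (A - b • 1) = 0 := by
  obtain ⟨a, ha⟩ := exists_isRoot_minpoly_of_natDegree_ne_three hA
  obtain ⟨h, hh⟩ := dvd_iff_isRoot.2 ha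
  have hmonic : h.Monic := (monic_X_sub_C a).of_mul_monic_left
    (hh ▸ minpoly.monic (Algebra.IsIntegral.isIntegral (R := F) A))
  have hle : (minpoly F A).natDegree ≤ 3 := by
    simpa using natDegree_le_of_dvd (minpoly_dvd_charpoly A) A.charpoly_monic.ne_zero
  have hdeg : (minpoly F A).natDegree = 1 + h.natDegree := by
    rw [hh, (monic_X_sub_C a).natDegree_mul hmonic, natDegree_X_sub_C]
  obtain ⟨b, hb⟩ : ∃ b, h ∣ X - C b := by
    obtain h0 | h1 : h.natDegree = 0 ∨ h.natDegree = 1 := by omega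
    · exact ⟨0, by simp [hmonic.natDegree_eq_zero.1 h0]⟩
    · exact ⟨-h.coeff 0, by rw [C_neg, sub_neg_eq_add, ← hmonic.eq_X_add_C h1]⟩
  refine ⟨a, b, ?_⟩
  have hdvd : minpoly F A ∣ (X - C a) * (X - C b) := hh ▸ mul_dvd_mul_left _ hb
  simpa [Algebra.algebraMap_eq_smul_one] using minpoly.dvd_iff.1 hdvd

theorem exists_eq_smul_one_add_vecMulVec {A : Matrix (Fin 3) (Fin 3) F}
    (hA : (minpoly F A).natDegree ≠ 3) :
    ∃ (a : F) (u v : Fin 3 → F), A = a • 1 + vecMulVec u v := by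
  obtain ⟨a, b, hab⟩ := exists_sub_smul_one_mul_sub_smul_one_eq_zero hA
  obtain ⟨c, hc⟩ : ∃ c : F, (A - c • 1).rank ≤ 1 := by
    have hrank := rank_add_rank_le_card_of_mul_eq_zero hab
    rw [Fintype.card_fin] at hrank
    obtain h | h : (A - a • 1).rank ≤ 1 ∨ (A - b • 1).rank ≤ 1 := by omega
    exacts [⟨a, h⟩, ⟨b, h⟩]
  obtain ⟨u, v, huv⟩ := exists_eq_vecMulVec_of_rank_le_one hc
  exact ⟨c, u, v, by rw [← huv, add_sub_cancel]⟩

/-- Five families of `3 × 3` matrices, in decreasing order of size, recording why the anticommutant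
of `A` can be large: `A` is singular or has two eigenvalues of sum `0`, `A` has eigenvalues
`0, a, -a`, and the corresponding degenerations to rank one. -/
def stratum (F : Type*) [Field F] : Fin 5 → Set (Matrix (Fin 3) (Fin 3) F)
  | 0 => Set.univ
  | 1 => {A | A.det = 0 ∨ (traceSub A).det = 0}
  | 2 => {A | A.trace = 0 ∧ A.det = 0}
  | 3 => {A | A.rank ≤ 1 ∨ (traceSub A).rank ≤ 1}
  | 4 => {A | A.trace = 0 ∧ A.rank ≤ 1}

/-- The bound on the dimension of the anticommutant paired with each `stratum`: every nonzero `A`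
lies in a stratum whose bound it satisfies, see `exists_mem_stratum`. -/
def stratumDim : Fin 5 → ℕ := ![0, 2, 3, 4, 5]

theorem exists_mem_stratum_of_finrank_le_two (h2 : (2 : F) ≠ 0) {A : Matrix (Fin 3) (Fin 3) F}
    (hd : Module.finrank F (anticommutant A) ≤ 2) :
    ∃ i, A ∈ stratum F i ∧ Module.finrank F (anticommutant A) ≤ stratumDim i := by
  by_cases hbot : anticommutant A = ⊥
  · exact ⟨0, Set.mem_univ A, by rw [hbot, finrank_bot]; exact Nat.zero_le _⟩
  · exact ⟨1, det_eq_zero_or_det_traceSub_eq_zero h2 hbot, hd⟩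

theorem exists_mem_stratum_vecMulVec (h2 : (2 : F) ≠ 0) {u v : Fin 3 → F} (hu : u ≠ 0)
    (hv : v ≠ 0) :
    ∃ i, vecMulVec u v ∈ stratum F i ∧
      Module.finrank F (anticommutant (vecMulVec u v)) ≤ stratumDim i := by
  have hrank := rank_vecMulVec_le u v
  by_cases huv : v ⬝ᵥ u = 0
  · have htrace : (vecMulVec u v).trace = 0 := by rw [trace_vecMulVec, dotProduct_comm, huv]
    exact ⟨4, ⟨htrace, hrank⟩, finrank_anticommutant_vecMulVec_le hu hv⟩
  · exact ⟨3, Or.inl hrank, finrank_anticommutant_vecMulVec_le_of_dotProduct_ne_zero h2 huv⟩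

theorem exists_mem_stratum_smul_one_add_vecMulVec (h2 : (2 : F) ≠ 0) {a : F} (ha : a ≠ 0)
    (u v : Fin 3 → F) :
    ∃ i, a • 1 + vecMulVec u v ∈ stratum F i ∧
      Module.finrank F (anticommutant (a • 1 + vecMulVec u v)) ≤ stratumDim i := by
  by_cases huv : 2 * a + v ⬝ᵥ u = 0
  · have htraceSub : traceSub (a • 1 + vecMulVec u v) = vecMulVec (-u) v := by
      rw [traceSub, trace_add, trace_smul, trace_one, Fintype.card_fin, Nat.cast_ofNat,
        trace_vecMulVec, dotProduct_comm, neg_vecMulVec, smul_eq_mul]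
      linear_combination (norm := module) huv • (1 : Matrix (Fin 3) (Fin 3) F)
    refine ⟨3, Or.inr ?_, finrank_anticommutant_smul_one_add_vecMulVec_le h2 ha huv⟩
    exact htraceSub ▸ rank_vecMulVec_le (-u) v
  · exact exists_mem_stratum_of_finrank_le_two h2
      ((finrank_anticommutant_smul_one_add_vecMulVec_le_one h2 ha huv).trans one_le_two)

theorem exists_mem_stratum (h2 : (2 : F) ≠ 0) {A : Matrix (Fin 3) (Fin 3) F} (hA : A ≠ 0) :
    ∃ i, A ∈ stratum F i ∧ Module.finrank F (anticommutant A) ≤ stratumDim i := by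
  by_cases hmin : (minpoly F A).natDegree = 3
  · by_cases hA0 : A.trace = 0 ∧ A.det = 0
    · exact ⟨2, hA0, finrank_anticommutant_le_card hmin⟩
    · exact exists_mem_stratum_of_finrank_le_two h2 (finrank_anticommutant_le_two h2 hmin hA0)
  obtain ⟨a, u, v, rfl⟩ := exists_eq_smul_one_add_vecMulVec hmin
  obtain rfl | ha := eq_or_ne a 0
  · rw [zero_smul, zero_add] at hA ⊢
    obtain ⟨hu, hv⟩ := not_or.1 (mt vecMulVec_eq_zero.2 hA)
    exact exists_mem_stratum_vecMulVec h2 hu hv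
  · exact exists_mem_stratum_smul_one_add_vecMulVec h2 ha u v

end Derogatory

section Counting

theorem sum_le_sum_ncard_mul {α κ : Type*} [Finite α] [Fintype κ] (s : Finset α) (S : κ → Set α)
    {f : α → ℝ} {w : κ → ℝ} (hw : ∀ i, 0 ≤ w i) (hf : ∀ a ∈ s, ∃ i, a ∈ S i ∧ f a ≤ w i) :
    ∑ a ∈ s, f a ≤ ∑ i, (S i).ncard * w i := by
  classical
  calc ∑ a ∈ s, f a ≤ ∑ a ∈ s, ∑ i, if a ∈ S i then w i else 0 := by
        refine sum_le_sum fun a ha => ?_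
        obtain ⟨i, hi, hfi⟩ := hf a ha
        refine hfi.trans (le_trans (by rw [if_pos hi])
          (single_le_sum (fun j _ => ?_) (mem_univ i)))
        split_ifs
        exacts [hw j, le_rfl]
    _ = ∑ i, (#{a ∈ s | a ∈ S i} : ℝ) * w i := by
        rw [sum_comm]
        simp only [← sum_filter, sum_const, nsmul_eq_mul]
    _ ≤ ∑ i, (S i).ncard * w i := by
        refine sum_le_sum fun i _ => mul_le_mul_of_nonneg_right (Nat.cast_le.2 ?_) (hw i)
        rw [← Set.ncard_coe_finset]
        exact Set.ncard_le_ncard (fun a ha => (mem_filter.1 ha).2) (Set.toFinite _)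

variable {F n : Type*} [Field F] [Fintype n] [DecidableEq n]

theorem det_add_smul_eq {B : Matrix n n F} (hB : B.det ≠ 0) (A : Matrix n n F) (x : F) :
    (A + x • B).det = (-(A * B⁻¹)).charpoly.eval x * B.det := by
  rw [eval_charpoly, ← det_mul, sub_mul, neg_mul, mul_assoc,
    nonsing_inv_mul B (isUnit_iff_ne_zero.2 hB), mul_one, sub_neg_eq_add, scalar_apply,
    ← smul_eq_diagonal_mul, add_comm]

variable [Fintype F]

open Classical in
theorem card_filter_det_add_smul_eq_zero_le {B : Matrix n n F} (hB : B.det ≠ 0)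
    (A : Matrix n n F) : #{x : F | (A + x • B).det = 0} ≤ Fintype.card n := by
  rw [← charpoly_natDegree_eq_dim (-(A * B⁻¹))]
  refine Polynomial.card_le_degree_of_subset_roots fun x hx => ?_
  rw [Finset.mem_val, mem_filter_univ, det_add_smul_eq hB, mul_eq_zero] at hx
  exact (Polynomial.mem_roots (charpoly_monic _).ne_zero).2 (hx.resolve_right hB)

theorem card_mul_ncard_det_eq_zero_le {U : Submodule F (Matrix n n F)} {B : Matrix n n F}
    (hBU : B ∈ U) (hB : B.det ≠ 0) :
    Fintype.card F * {A | A ∈ U ∧ A.det = 0}.ncard ≤ Nat.card U * Fintype.card n := by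
  classical
  have hfiber (x : F) : {A | A ∈ U ∧ A.det = 0}.ncard ≤ #{A : U | (A.1 + x • B).det = 0} := by
    have hsub : {A | A ∈ U ∧ A.det = 0} ⊆
        (fun A : U => A.1 + x • B) '' {A : U | (A.1 + x • B).det = 0} := by
      rintro A ⟨hAU, hA⟩
      refine ⟨⟨A - x • B, sub_mem hAU (U.smul_mem x hBU)⟩, ?_, sub_add_cancel _ _⟩
      simpa using hA
    rw [← Set.ncard_coe_finset, coe_filter_univ]
    exact (Set.ncard_le_ncard hsub (Set.toFinite _)).trans (Set.ncard_image_le (Set.toFinite _))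
  rw [← card_univ (α := F), Nat.card_eq_fintype_card, ← card_univ (α := U)]
  exact card_mul_le_card_mul (fun (x : F) (A : U) => (A.1 + x • B).det = 0) (fun x _ => hfiber x)
    fun A _ => card_filter_det_add_smul_eq_zero_le hB A.1

variable (F n) in
omit [DecidableEq n] in
theorem ncard_rank_le_one_le (k : ℕ) :
    {A : Matrix (Fin (k + 1)) n F | A.rank ≤ 1}.ncard ≤
      (k + 1) * Fintype.card F ^ (k + Fintype.card n) := by
  let f : Fin (k + 1) × (Fin k → F) × (n → F) → Matrix (Fin (k + 1)) n F :=
    fun p => vecMulVec (p.1.insertNth 1 p.2.1) p.2.2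
  have hsub : {A : Matrix (Fin (k + 1)) n F | A.rank ≤ 1} ⊆ Set.range f := by
    intro A hA
    obtain ⟨i, u, v, rfl⟩ := exists_eq_vecMulVec_insertNth_of_rank_le_one hA
    exact ⟨(i, u, v), rfl⟩
  calc _ ≤ (Set.range f).ncard := Set.ncard_le_ncard hsub (Set.toFinite _)
    _ ≤ Nat.card (Fin (k + 1) × (Fin k → F) × (n → F)) := Finite.card_range_le f
    _ = _ := by
        classical
        simp [pow_add]

variable (F) in
theorem ncard_trace_eq_zero_and_rank_le_one_le (k : ℕ) :
    {A : Matrix (Fin (k + 1)) (Fin (k + 1)) F | A.trace = 0 ∧ A.rank ≤ 1}.ncard ≤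
      (k + 1) * Fintype.card F ^ (2 * k) := by
  let u (p : Fin (k + 1) × (Fin k → F)) : Fin (k + 1) → F := p.1.insertNth 1 p.2
  let f : (Σ p, LinearMap.ker (dotProductEquiv F (Fin (k + 1)) (u p))) →
      Matrix (Fin (k + 1)) (Fin (k + 1)) F := fun p => vecMulVec (u p.1) p.2
  have hsub : {A : Matrix (Fin (k + 1)) (Fin (k + 1)) F | A.trace = 0 ∧ A.rank ≤ 1} ⊆
      Set.range f := by
    rintro A ⟨htrace, hrank⟩
    obtain ⟨i, w, v, rfl⟩ := exists_eq_vecMulVec_insertNth_of_rank_le_one hrank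
    exact ⟨⟨(i, w), v, (trace_vecMulVec _ _).symm.trans htrace⟩, rfl⟩
  have hker (p) : Nat.card (LinearMap.ker (dotProductEquiv F (Fin (k + 1)) (u p))) =
      Fintype.card F ^ k := by
    have hu : u p ≠ 0 := fun h => one_ne_zero (α := F) (by simpa [u] using congrFun h p.1)
    rw [Module.natCard_eq_pow_finrank (K := F), finrank_ker_dotProductEquiv hu, Fintype.card_fin,
      Nat.card_eq_fintype_card, Nat.add_sub_cancel]
  calc _ ≤ (Set.range f).ncard := Set.ncard_le_ncard hsub (Set.toFinite _)
    _ ≤ Nat.card (Σ p, LinearMap.ker (dotProductEquiv F (Fin (k + 1)) (u p))) :=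
        Finite.card_range_le f
    _ = _ := by
        rw [Nat.card_sigma, sum_congr rfl fun p _ => hker p]
        simp [two_mul, pow_add, mul_assoc]

end Counting

section Strata

variable {F : Type*} [Field F]

theorem traceSub_injective (h2 : (2 : F) ≠ 0) :
    Function.Injective (traceSub : Matrix (Fin 3) (Fin 3) F → _) := by
  intro A B hAB
  have htrace : A.trace = B.trace := by
    refine mul_left_cancel₀ h2 ?_
    have h := congrArg trace hAB
    simp only [traceSub, trace_sub, trace_smul, trace_one, Fintype.card_fin, Nat.cast_ofNat,
      smul_eq_mul] at h
    linear_combination h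
  rwa [traceSub, traceSub, htrace, sub_right_inj] at hAB

theorem ncard_union_preimage_traceSub_le [Finite F] (h2 : (2 : F) ≠ 0)
    (S : Set (Matrix (Fin 3) (Fin 3) F)) : (S ∪ traceSub ⁻¹' S).ncard ≤ 2 * S.ncard := by
  have h : (traceSub ⁻¹' S).ncard ≤ S.ncard :=
    Set.ncard_le_ncard_of_injOn traceSub (fun _ hA => hA) (traceSub_injective h2).injOn
      (Set.toFinite S)
  have hunion := Set.ncard_union_le S (traceSub ⁻¹' S)
  omega

variable [Fintype F]

variable (F) in
theorem ncard_det_eq_zero_le :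
    {A : Matrix (Fin 3) (Fin 3) F | A.det = 0}.ncard ≤ 3 * Fintype.card F ^ 8 := by
  have h := card_mul_ncard_det_eq_zero_le (U := ⊤) (B := (1 : Matrix (Fin 3) (Fin 3) F))
    Submodule.mem_top (by simp)
  rw [Module.natCard_eq_pow_finrank (K := F), finrank_top, Module.finrank_matrix,
    Module.finrank_self, Fintype.card_fin, Nat.card_eq_fintype_card] at h
  simp only [Submodule.mem_top, true_and] at h
  refine Nat.le_of_mul_le_mul_left (h.trans_eq ?_) (Fintype.card_pos (α := F))
  ring

theorem finrank_ker_traceLinearMap {F n : Type*} [Field F] [Fintype n] [Nonempty n] :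
    Module.finrank F (LinearMap.ker (traceLinearMap n F F)) = Fintype.card n ^ 2 - 1 := by
  have h := LinearMap.finrank_range_add_finrank_ker (traceLinearMap n F F)
  rw [LinearMap.range_eq_top.2 trace_surjective, finrank_top, Module.finrank_self,
    Module.finrank_matrix, Module.finrank_self, mul_one, ← sq] at h
  omega

theorem ncard_trace_eq_zero_and_det_eq_zero_le (h2 : (2 : F) ≠ 0) :
    {A : Matrix (Fin 3) (Fin 3) F | A.trace = 0 ∧ A.det = 0}.ncard ≤ 3 * Fintype.card F ^ 7 := by
  have h := card_mul_ncard_det_eq_zero_le (U := LinearMap.ker (traceLinearMap (Fin 3) F F))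
    (B := diagonal ![1, 1, -2])
    (by simp [trace_diagonal, Fin.sum_univ_three]; norm_num)
    (by simpa [det_diagonal, Fin.prod_univ_three] using h2)
  rw [Module.natCard_eq_pow_finrank (K := F), finrank_ker_traceLinearMap, Fintype.card_fin,
    Nat.card_eq_fintype_card] at h
  simp only [LinearMap.mem_ker, traceLinearMap_apply] at h
  refine Nat.le_of_mul_le_mul_left (h.trans_eq ?_) (Fintype.card_pos (α := F))
  ring

theorem ncard_stratum_le (h2 : (2 : F) ≠ 0) : ∀ i : Fin 5, (stratum F i).ncard ≤
    ![1, 6, 3, 6, 3] i * Fintype.card F ^ (![9, 8, 7, 5, 4] i : ℕ)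
  | 0 => by simp [stratum, Set.ncard_univ, Nat.card_eq_fintype_card, Matrix, ← pow_mul]
  | 1 => (ncard_union_preimage_traceSub_le h2 {A | A.det = 0}).trans
      ((Nat.mul_le_mul_left 2 (ncard_det_eq_zero_le F)).trans_eq (mul_assoc 2 3 _).symm)
  | 2 => ncard_trace_eq_zero_and_det_eq_zero_le h2
  | 3 => (ncard_union_preimage_traceSub_le h2 {A | A.rank ≤ 1}).trans
      ((Nat.mul_le_mul_left 2 (ncard_rank_le_one_le F (Fin 3) 2)).trans_eq (mul_assoc 2 3 _).symm)
  | 4 => ncard_trace_eq_zero_and_rank_le_one_le F 2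

theorem ncard_stratum_mul_sqrt_le (h2 : (2 : F) ≠ 0) {r : ℕ} (hr : 3 ≤ r) (i : Fin 5) :
    (stratum F i).ncard * √((Fintype.card F : ℝ) ^ ((3 ^ 2 + stratumDim i) * r)) ≤
      ![1, 6, 3, 6, 3] i * (Fintype.card F : ℝ) ^ (7 * r + 4) := by
  have hq : (1 : ℝ) ≤ Fintype.card F := mod_cast Fintype.card_pos
  have hcard : ((stratum F i).ncard : ℝ) ≤
      ![1, 6, 3, 6, 3] i * (Fintype.card F : ℝ) ^ (![9, 8, 7, 5, 4] i : ℕ) := by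
    refine (Nat.cast_le.2 (ncard_stratum_le h2 i)).trans_eq ?_
    fin_cases i <;> simp
  have hexp : 2 * ![9, 8, 7, 5, 4] i + (3 ^ 2 + stratumDim i) * r ≤ 2 * (7 * r + 4) := by
    fin_cases i <;> simp [stratumDim] <;> omega
  have hsqrt : (Fintype.card F : ℝ) ^ (![9, 8, 7, 5, 4] i : ℕ) *
      √((Fintype.card F : ℝ) ^ ((3 ^ 2 + stratumDim i) * r)) ≤ Fintype.card F ^ (7 * r + 4) := by
    refine (sq_le_sq₀ (by positivity) (by positivity)).1 ?_
    rw [mul_pow, Real.sq_sqrt (by positivity), ← pow_mul, ← pow_mul, ← pow_add]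
    exact pow_le_pow_right₀ hq (by omega)
  calc _ ≤ _ := mul_le_mul_of_nonneg_right hcard (Real.sqrt_nonneg _)
    _ = ![1, 6, 3, 6, 3] i * _ := mul_assoc _ _ _
    _ ≤ _ := mul_le_mul_of_nonneg_left hsqrt (by fin_cases i <;> simp)

open Classical in
theorem sum_sqrt_anticommutant_le (h2 : (2 : F) ≠ 0) {r : ℕ} (hr : 3 ≤ r) :
    ∑ A : Matrix (Fin 3) (Fin 3) F with A ≠ 0,
      √((Fintype.card F : ℝ) ^ ((3 ^ 2 + Module.finrank F (anticommutant A)) * r)) ≤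
      19 * (Fintype.card F : ℝ) ^ (7 * r + 4) := by
  have hq : (1 : ℝ) ≤ Fintype.card F := mod_cast Fintype.card_pos
  calc _ ≤ ∑ i, (stratum F i).ncard *
        √((Fintype.card F : ℝ) ^ ((3 ^ 2 + stratumDim i) * r)) := by
        refine sum_le_sum_ncard_mul _ _ (fun i => Real.sqrt_nonneg _) fun A hA => ?_
        obtain ⟨i, hi, hdim⟩ := exists_mem_stratum h2 (mem_filter.1 hA).2
        exact ⟨i, hi, Real.sqrt_le_sqrt (pow_le_pow_right₀ hq (by gcongr))⟩
    _ ≤ ∑ i, ![1, 6, 3, 6, 3] i * (Fintype.card F : ℝ) ^ (7 * r + 4) :=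
        sum_le_sum fun i _ => ncard_stratum_mul_sqrt_le h2 hr i
    _ = 19 * (Fintype.card F : ℝ) ^ (7 * r + 4) := by
        rw [← sum_mul]
        norm_num [Fin.sum_univ_succ]

end Strata

end FalconerMatrix

open FalconerMatrix in
theorem falconer_rank_three_general {ι F : Type*} [Fintype ι] [Field F] [Fintype F]
    (hι : 3 ≤ Fintype.card ι) (hF : Odd (Fintype.card F))
    (E : Finset (ι → Matrix (Fin 3) (Fin 3) F))
    (hE : 19 * (Fintype.card F : ℝ) ^ (7 * Fintype.card ι + 4) < (E.card : ℝ)) :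
    {T : Matrix (Fin 3) (Fin 3) F | ∃ X ∈ E, ∃ Y ∈ E, ∑ i, (X i - Y i) ^ 2 = T} = Set.univ := by
  classical
  have h2 : (2 : F) ≠ 0 := Ring.two_ne_zero fun h =>
    Nat.not_odd_iff.2 (FiniteField.even_card_of_char_two h) hF
  refine Set.eq_univ_of_forall fun T => ?_
  by_contra hT
  have hmissing : ∀ X ∈ E, ∀ Y ∈ E, ∑ i, (X i - Y i) ^ 2 ≠ T :=
    fun X hX Y hY h => hT ⟨X, hX, Y, hY, h⟩
  have hbound := card_le_sum_sqrt_anticommutant hmissing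
  rw [Fintype.card_fin] at hbound
  exact (hbound.trans (sum_sqrt_anticommutant_le h2 hι)).not_gt hE

/-- Theorem 1.5 (rank 3 Falconer): if `E ⊆ M_3(F_q)^r`, `r ≥ 3`, and
`#E > c q^{7r+4+ε}`, then every matrix arises as a distance of `E`. -/
theorem falconer_rank_three (r : ℕ) (hr : 3 ≤ r) (ε : ℝ) (hε : 0 < ε) :
    ∃ c : ℝ, 0 < c ∧
      ∀ (F : Type) [Field F] [Fintype F],
        Odd (Fintype.card F) →
        ∀ E : Finset (Fin r → Matrix (Fin 3) (Fin 3) F),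
          c * (Fintype.card F : ℝ) ^ ((7 * (r : ℝ) + 4) + ε) < (E.card : ℝ) →
          {T : Matrix (Fin 3) (Fin 3) F |
              ∃ X ∈ E, ∃ Y ∈ E, ∑ i, (X i - Y i) ^ 2 = T} = Set.univ := by
  refine ⟨19, by norm_num, fun F _ _ hF E hE => falconer_rank_three_general (by simpa) hF E ?_⟩
  have hq : (1 : ℝ) ≤ Fintype.card F := mod_cast Fintype.card_pos
  rw [Fintype.card_fin, ← Real.rpow_natCast]
  push_cast
  exact (mul_le_mul_of_nonneg_left (Real.rpow_le_rpow_of_exponent_le hq (by linarith))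
    (by norm_num)).trans_lt hE
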